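/- arXiv:1201.2219 — 2 statements merged into one kernel-verified Lean document; each statement's English description precedes it below -/
import Mathlib

section
/- Let n > q ≥ 2 and 0 ≤ k ≤ q+1. Let Π be a smooth Nambu structure of order q on an open neighborhood U of 0 in ℝⁿ with Π(0) = 0 and with linear part Π_{k,q} at 0. Then the local singular locus of Π near 0 is a smooth submanifold of codimension q+1 containing 0: there exist an open neighborhood W ⊆ U of 0 and a C^∞ diffeomorphism ψ from W onto an open subset of ℝⁿ with ψ(0) = 0 such that {x ∈ W : Π(x) = 0} = {x ∈ W : ψ(x)₁ = ⋯ = ψ(x)_{q+1} = 0}. -/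
open scoped ContDiff

namespace NambuLin

/-- Index set for the standard basis of the `q`-th exterior power of `ℝⁿ`:
increasing multi-indices, encoded as `q`-element subsets of `Fin n`. -/
abbrev Idx (n q : ℕ) := {s : Finset (Fin n) // s.card = q}

/-- A `q`-vector of `ℝⁿ`, given by its coordinates in the standard basis
`{e_{i₁} ∧ ⋯ ∧ e_{i_q}}` of `⋀^q(ℝⁿ)`. -/
abbrev MultiVec (n q : ℕ) := Idx n q → ℝ

/-- The Jacobian matrix of a map `φ : ℝⁿ → ℝⁿ` at a point `x`. -/
noncomputable def jac {n : ℕ} (φ : (Fin n → ℝ) → (Fin n → ℝ)) (x : Fin n → ℝ) :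
    Matrix (Fin n) (Fin n) ℝ :=
  Matrix.of fun i j => fderiv ℝ φ x (Pi.single j 1) i

/-- The `q`-th exterior power `⋀^q A` of a matrix `A`, acting on `q`-vectors in
coordinates: `((⋀^q A) w)_J = ∑_I det(A[J,I]) w_I`. -/
noncomputable def extPow (n q : ℕ) (A : Matrix (Fin n) (Fin n) ℝ) (w : MultiVec n q) :
    MultiVec n q :=
  fun J => ∑ I : Idx n q,
    (A.submatrix (J.1.orderEmbOfFin J.2) (I.1.orderEmbOfFin I.2)).det * w I

/-- The constant `q`-vector `e₁ ∧ ⋯ ∧ e_q` in coordinates. -/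
def stdVec (n q : ℕ) : MultiVec n q :=
  fun J => if (J : Finset (Fin n)) = Finset.univ.filter (fun i : Fin n => (i : ℕ) < q) then 1 else 0

/-- `φ` is a `C^∞` diffeomorphism from the open set `W` onto the open set `φ '' W`. -/
def IsSmoothDiffeoOn {n : ℕ} (φ : (Fin n → ℝ) → (Fin n → ℝ)) (W : Set (Fin n → ℝ)) : Prop :=
  IsOpen W ∧ IsOpen (φ '' W) ∧ ContDiffOn ℝ ∞ φ W ∧
    ∃ ψ : (Fin n → ℝ) → (Fin n → ℝ), ContDiffOn ℝ ∞ ψ (φ '' W) ∧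
      (∀ x ∈ W, ψ (φ x) = x) ∧ (∀ y ∈ φ '' W, φ (ψ y) = y)

/-- `P` is a (smooth) Nambu structure of order `q` on `U`: it is a smooth `q`-vector
field, and around every point where it does not vanish there is a local `C^∞`
coordinate system in which it becomes the constant `q`-vector `e₁ ∧ ⋯ ∧ e_q`. -/
def IsNambu (n q : ℕ) (P : (Fin n → ℝ) → MultiVec n q) (U : Set (Fin n → ℝ)) : Prop :=
  ContDiffOn ℝ ∞ P U ∧
    ∀ p ∈ U, P p ≠ 0 →
      ∃ W, p ∈ W ∧ W ⊆ U ∧ ∃ φ, IsSmoothDiffeoOn φ W ∧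
        ∀ x ∈ W, extPow n q (jac φ x) (P x) = stdVec n q

/-- The signs `ε_j` (`= 1` for the first `k` indices, `= -1` afterwards;
`0`-based indexing, so `ε_j = 1` iff `j < k`). -/
def eps {n : ℕ} (k : ℕ) (j : Fin n) : ℝ := if (j : ℕ) < k then 1 else -1

/-- The set of indices `{1, …, q+1}` (in `0`-based form: `{0,…,q}`). -/
def topIdx (n q : ℕ) : Finset (Fin n) := Finset.univ.filter (fun i : Fin n => (i : ℕ) < q + 1)

/-- The nondegenerate Type 1 linear Nambu structure `Π_{k,q}` of order `q` and
signature `(k, q+1-k)`: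
`Π_{k,q}(x) = ∑_{j=1}^{q+1} (−1)^{j−1} ε_j x_j e₁ ∧ ⋯ ∧ ê_j ∧ ⋯ ∧ e_{q+1}`
(here written with `0`-based indices `j`, whence the sign `(−1)^j`). -/
def modelPi (n q k : ℕ) (x : Fin n → ℝ) : MultiVec n q :=
  fun J => ∑ j : Fin n,
    if ((j : ℕ) < q + 1 ∧ (J : Finset (Fin n)) = (topIdx n q).erase j)
    then (-1 : ℝ) ^ (j : ℕ) * eps k j * x j else 0

/-!
Where `Π ≠ 0` it is decomposable, so its coordinates on the `q + 1` faces of a fixed multi-index of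
length `q + 1` are the maximal minors `y_j` of a smooth `(q+1) × q` matrix `M`, and Laplace
expansion gives `∑_j (-1)^j M_{ji} y_j = 0` for every `i`. If all `y_j` vanish at a point and their
differentials are independent there, differentiating this identity yields `M = 0` at that point;
but minors of order `q ≥ 2` have zero differential at `M = 0`, a contradiction. Thus `Π = 0`
wherever the `y_j` vanish with independent differentials. When the linear part is nondegenerate,
`y` is a submersion near the base point, so the singular locus is the submanifold `{y = 0}`.
-/

open scoped Topology

section Minors

/-- The maximal minors of a `(q+1) × q` matrix: the `j`-th one omits the row `j`. -/
def maximalMinors {R : Type*} [CommRing R] {q : ℕ} (M : Matrix (Fin (q + 1)) (Fin q) R) :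
    Fin (q + 1) → R :=
  fun j => (M.submatrix j.succAbove id).det

theorem sum_mul_maximalMinors_eq_zero {R : Type*} [CommRing R] {q : ℕ}
    (M : Matrix (Fin (q + 1)) (Fin q) R) (i : Fin q) :
    ∑ j : Fin (q + 1), (-1) ^ (j : ℕ) * M j i * maximalMinors M j = 0 := by
  -- Expand along the first column the determinant of `M` bordered by a copy of its column `i`.
  let A : Matrix (Fin (q + 1)) (Fin (q + 1)) R := Matrix.of fun j => Fin.cons (M j i) (M j)
  have hA : A.det = 0 :=
    Matrix.det_zero_of_column_eq (Fin.succ_ne_zero i).symm fun j => by simp [A]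
  rw [Matrix.det_succ_column_zero] at hA
  exact hA

variable {𝕜 E : Type*} [NontriviallyNormedField 𝕜] [NormedAddCommGroup E] [NormedSpace 𝕜 E]
  {x : E}

theorem hasFDerivAt_det_of_eq_zero {ι : Type*} [Fintype ι] [DecidableEq ι] [Nontrivial ι]
    {M : E → Matrix ι ι 𝕜} (hM : ∀ i j, DifferentiableAt 𝕜 (fun y => M y i j) x) (h0 : M x = 0) :
    HasFDerivAt (fun y => (M y).det) (0 : E →L[𝕜] 𝕜) x := by
  have hprod (σ : Equiv.Perm ι) :
      HasFDerivAt (fun y => ∏ i, M y (σ i) i) (0 : E →L[𝕜] 𝕜) x := by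
    refine (HasFDerivAt.finsetProd fun i _ => (hM (σ i) i).hasFDerivAt).congr_fderiv ?_
    refine Finset.sum_eq_zero fun i _ => ?_
    obtain ⟨j, hj⟩ := exists_ne i
    rw [Finset.prod_eq_zero (Finset.mem_erase.2 ⟨hj, Finset.mem_univ j⟩) (by simp [h0])]
    exact zero_smul 𝕜 (fderiv 𝕜 (fun y => M y (σ i) i) x)
  simp only [Matrix.det_apply']
  refine (HasFDerivAt.fun_sum fun σ _ =>
    (hprod σ).const_mul ((Equiv.Perm.sign σ : ℤ) : 𝕜)).congr_fderiv ?_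
  exact Finset.sum_eq_zero fun σ _ => smul_zero _

theorem differentiableAt_maximalMinors {q : ℕ} {M : E → Matrix (Fin (q + 1)) (Fin q) 𝕜}
    (hM : ∀ i j, DifferentiableAt 𝕜 (fun y => M y i j) x) :
    DifferentiableAt 𝕜 (fun y => maximalMinors (M y)) x := by
  refine differentiableAt_pi.2 fun j => ?_
  simp only [maximalMinors, Matrix.det_apply', Matrix.submatrix_apply]
  fun_prop

variable {q : ℕ} {M : E → Matrix (Fin (q + 1)) (Fin q) 𝕜}

theorem eq_zero_of_surjective_fderiv_maximalMinors
    (hM : ∀ i j, DifferentiableAt 𝕜 (fun y => M y i j) x) (h0 : maximalMinors (M x) = 0)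
    (hs : Function.Surjective (fderiv 𝕜 (fun y => maximalMinors (M y)) x)) : M x = 0 := by
  ext j i
  have hminor := hasFDerivAt_pi'.1 (differentiableAt_maximalMinors hM).hasFDerivAt
  have hsum := HasFDerivAt.fun_sum (u := Finset.univ) fun (j : Fin (q + 1)) _ =>
    ((hM j i).hasFDerivAt.const_mul ((-1 : 𝕜) ^ (j : ℕ))).mul (hminor j)
  have hconst : HasFDerivAt
      (fun y => ∑ j : Fin (q + 1), (-1) ^ (j : ℕ) * M y j i * maximalMinors (M y) j)
      (0 : E →L[𝕜] 𝕜) x := by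
    simpa only [sum_mul_maximalMinors_eq_zero] using hasFDerivAt_const (0 : 𝕜) x
  obtain ⟨v, hv⟩ := hs (Pi.single j 1)
  have hsum_v := DFunLike.congr_fun (hsum.unique hconst) v
  simpa [h0, hv, Pi.single_apply] using hsum_v

/-- For `q = 1` this fails: the minors of a `2 × 1` matrix are its entries. -/
theorem not_surjective_fderiv_maximalMinors (hq : 2 ≤ q)
    (hM : ∀ i j, DifferentiableAt 𝕜 (fun y => M y i j) x) (h0 : maximalMinors (M x) = 0) :
    ¬ Function.Surjective (fderiv 𝕜 (fun y => maximalMinors (M y)) x) := by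
  intro hs
  have hMx : M x = 0 := eq_zero_of_surjective_fderiv_maximalMinors hM h0 hs
  have : Nontrivial (Fin q) := Fin.nontrivial_iff_two_le.2 hq
  have hzero : HasFDerivAt (fun y => maximalMinors (M y)) (0 : E →L[𝕜] Fin (q + 1) → 𝕜) x :=
    hasFDerivAt_pi'.2 fun j => hasFDerivAt_det_of_eq_zero (fun _ _ => hM _ _) (by simp [hMx])
  obtain ⟨v, hv⟩ := hs 1
  simp [hzero.fderiv] at hv

end Minors

section ExteriorPower

theorem repr_exteriorPower_map {R M N ι κ : Type*} [CommRing R] [AddCommGroup M] [Module R M]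
    [AddCommGroup N] [Module R N] [LinearOrder ι] [Fintype ι] [LinearOrder κ] [Finite κ]
    {q : ℕ} (b : Module.Basis ι R M) (c : Module.Basis κ R N) (f : M →ₗ[R] N)
    (I : Set.powersetCard ι q) (J : Set.powersetCard κ q) :
    (c.exteriorPower q).repr (exteriorPower.map q f (b.exteriorPower q I)) J =
      ((LinearMap.toMatrix b c f).submatrix (Set.powersetCard.ofFinEmbEquiv.symm J)
        (Set.powersetCard.ofFinEmbEquiv.symm I)).det := by
  rw [exteriorPower.basis_repr_apply, exteriorPower.basis_apply,
    exteriorPower.map_apply_ιMulti_family, exteriorPower.ιMulti_family,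
    exteriorPower.ιMultiDual_apply_ιMulti, ← Matrix.det_transpose]
  congr 1
  ext a b
  simp [LinearMap.toMatrix_apply]

variable {n q : ℕ}

/-- The standard basis `{e_{i₁} ∧ ⋯ ∧ e_{i_q}}` of Mathlib's `⋀^q(ℝⁿ)`, indexed by the
multi-indices of `MultiVec n q`; through it `extPow` is the functorial exterior power. -/
noncomputable def extBasis (n q : ℕ) : Module.Basis (Idx n q) ℝ (⋀[ℝ]^q (Fin n → ℝ)) :=
  (Pi.basisFun ℝ (Fin n)).exteriorPower q

theorem extBasis_equivFun_map_self (A : Matrix (Fin n) (Fin n) ℝ) (I J : Idx n q) :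
    (extBasis n q).equivFun (exteriorPower.map q A.toLin' (extBasis n q I)) J =
      (A.submatrix (J.1.orderEmbOfFin J.2) (I.1.orderEmbOfFin I.2)).det := by
  have hdet := repr_exteriorPower_map (Pi.basisFun ℝ (Fin n)) (Pi.basisFun ℝ (Fin n)) A.toLin' I J
  rwa [LinearMap.toMatrix_eq_toMatrix', LinearMap.toMatrix'_toLin'] at hdet

theorem extBasis_equivFun_map (A : Matrix (Fin n) (Fin n) ℝ) (w : ⋀[ℝ]^q (Fin n → ℝ)) :
    (extBasis n q).equivFun (exteriorPower.map q A.toLin' w) =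
      extPow n q A ((extBasis n q).equivFun w) := by
  ext J
  conv_lhs => rw [← (extBasis n q).sum_equivFun w]
  simp only [map_sum, map_smul, Finset.sum_apply, Pi.smul_apply, smul_eq_mul,
    extBasis_equivFun_map_self, extPow, mul_comm]

theorem extPow_one (w : MultiVec n q) : extPow n q 1 w = w := by
  obtain ⟨w, rfl⟩ := (extBasis n q).equivFun.surjective w
  rw [← extBasis_equivFun_map, Matrix.toLin'_one, exteriorPower.map_id, LinearMap.id_apply]

theorem extPow_mul (A B : Matrix (Fin n) (Fin n) ℝ) (w : MultiVec n q) :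
    extPow n q (A * B) w = extPow n q A (extPow n q B w) := by
  obtain ⟨w, rfl⟩ := (extBasis n q).equivFun.surjective w
  simp only [← extBasis_equivFun_map, Matrix.toLin'_mul, exteriorPower.map_comp,
    LinearMap.comp_apply]

/-- The multi-index `{s 0 < ⋯ < s (q-1)}`. -/
def Idx.ofOrderEmb (s : Fin q ↪o Fin n) : Idx n q :=
  ⟨Finset.univ.map s.toEmbedding, by simp⟩

theorem Idx.orderEmbOfFin_ofOrderEmb (s : Fin q ↪o Fin n) :
    (ofOrderEmb s).1.orderEmbOfFin (ofOrderEmb s).2 = s :=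
  (Finset.orderEmbOfFin_unique' _ fun i => by simp [ofOrderEmb]).symm

theorem stdVec_eq_single (hqn : q ≤ n) :
    stdVec n q = Pi.single (Idx.ofOrderEmb (Fin.castLEOrderEmb hqn)) 1 := by
  have hmem : Finset.univ.filter (fun i : Fin n => (i : ℕ) < q) =
      Idx.ofOrderEmb (Fin.castLEOrderEmb hqn) := by
    ext i
    simp only [Idx.ofOrderEmb, Finset.mem_filter_univ, Finset.mem_map, Finset.mem_univ, true_and]
    exact (Set.ext_iff.1 (Fin.range_castLE hqn) i).symm
  ext J
  simp only [stdVec, hmem, Subtype.coe_inj, Pi.single_apply]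

theorem extPow_stdVec (hqn : q ≤ n) (A : Matrix (Fin n) (Fin n) ℝ) (J : Idx n q) :
    extPow n q A (stdVec n q) J =
      (A.submatrix (J.1.orderEmbOfFin J.2) (Fin.castLEOrderEmb hqn)).det := by
  simp [extPow, stdVec_eq_single hqn, Pi.single_apply, Idx.orderEmbOfFin_ofOrderEmb]

end ExteriorPower

section LocalDiffeomorphisms

theorem fderiv_comp_fderiv_of_eventuallyEq_id {𝕜 E F : Type*} [NontriviallyNormedField 𝕜]
    [NormedAddCommGroup E] [NormedSpace 𝕜 E] [NormedAddCommGroup F] [NormedSpace 𝕜 F]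
    {f : E → F} {g : F → E} {x : E} (hg : DifferentiableAt 𝕜 g (f x))
    (hf : DifferentiableAt 𝕜 f x) (hgf : g ∘ f =ᶠ[𝓝 x] id) :
    (fderiv 𝕜 g (f x)).comp (fderiv 𝕜 f x) = ContinuousLinearMap.id 𝕜 E := by
  rw [← fderiv_comp x hg hf, hgf.fderiv_eq, fderiv_id]

variable {n : ℕ} {φ : (Fin n → ℝ) → (Fin n → ℝ)} {W : Set (Fin n → ℝ)} {x : Fin n → ℝ}

theorem jac_eq_toMatrix' (φ : (Fin n → ℝ) → (Fin n → ℝ)) (x : Fin n → ℝ) :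
    jac φ x = LinearMap.toMatrix' (fderiv ℝ φ x).toLinearMap := by
  ext i j
  simp [jac, LinearMap.toMatrix'_apply]

theorem differentiableAt_jac (hφ : ContDiffAt ℝ 2 φ x) (i j : Fin n) :
    DifferentiableAt ℝ (fun y => jac φ y i j) x := by
  have hd : DifferentiableAt ℝ (fderiv ℝ φ) x :=
    (hφ.fderiv_right (m := 1) (by norm_num)).differentiableAt one_ne_zero
  exact differentiableAt_pi.1 (hd.clm_apply (differentiableAt_const (Pi.single j 1))) i

theorem IsSmoothDiffeoOn.contDiffAt (hφ : IsSmoothDiffeoOn φ W) (hx : x ∈ W) :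
    ContDiffAt ℝ ∞ φ x :=
  hφ.2.2.1.contDiffAt (hφ.1.mem_nhds hx)

theorem IsSmoothDiffeoOn.exists_leftInverse_fderiv (hφ : IsSmoothDiffeoOn φ W) :
    ∃ ψ : (Fin n → ℝ) → (Fin n → ℝ), ∀ x ∈ W, ContDiffAt ℝ ∞ ψ (φ x) ∧
      (fderiv ℝ ψ (φ x)).comp (fderiv ℝ φ x) = ContinuousLinearMap.id ℝ (Fin n → ℝ) := by
  obtain ⟨hW, hφW, -, ψ, hψ, hψφ, -⟩ := id hφ
  refine ⟨ψ, fun x hx => ?_⟩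
  have hψx : ContDiffAt ℝ ∞ ψ (φ x) := hψ.contDiffAt (hφW.mem_nhds (Set.mem_image_of_mem φ hx))
  exact ⟨hψx, fderiv_comp_fderiv_of_eventuallyEq_id (hψx.differentiableAt (by simp))
    ((hφ.contDiffAt hx).differentiableAt (by simp))
    (Filter.eventually_of_mem (hW.mem_nhds hx) hψφ)⟩

theorem IsSmoothDiffeoOn.surjective_fderiv (hφ : IsSmoothDiffeoOn φ W) (hx : x ∈ W) :
    Function.Surjective (fderiv ℝ φ x) := by
  obtain ⟨ψ, hψ⟩ := hφ.exists_leftInverse_fderiv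
  have hleft : Function.LeftInverse (fderiv ℝ ψ (φ x)) (fderiv ℝ φ x) :=
    DFunLike.congr_fun (hψ x hx).2
  exact LinearMap.injective_iff_surjective.1
    (show Function.Injective (fderiv ℝ φ x).toLinearMap from hleft.injective)

theorem IsSmoothDiffeoOn.surjective_fderiv_coords (hφ : IsSmoothDiffeoOn φ W) (hx : x ∈ W)
    {ι : Type*} [Finite ι] {e : ι → Fin n} (he : Function.Injective e) :
    Function.Surjective (fderiv ℝ (fun y i => φ y (e i)) x) := by
  cases nonempty_fintype ι
  have hφx := ((hφ.contDiffAt hx).differentiableAt (by simp)).hasFDerivAt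
  have hcoords : HasFDerivAt (fun y i => φ y (e i))
      (((LinearMap.funLeft ℝ ℝ e).toContinuousLinearMap).comp (fderiv ℝ φ x)) x :=
    (LinearMap.funLeft ℝ ℝ e).toContinuousLinearMap.hasFDerivAt.comp x hφx
  rw [hcoords.fderiv]
  exact (LinearMap.funLeft_surjective_of_injective ℝ ℝ e he).comp (hφ.surjective_fderiv hx)

theorem jac_mul_jac_eq_one {ψ : (Fin n → ℝ) → (Fin n → ℝ)} {y : Fin n → ℝ}
    (h : (fderiv ℝ ψ y).comp (fderiv ℝ φ x) = ContinuousLinearMap.id ℝ (Fin n → ℝ)) :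
    jac ψ y * jac φ x = 1 := by
  rw [jac_eq_toMatrix', jac_eq_toMatrix', ← LinearMap.toMatrix'_comp,
    ← ContinuousLinearMap.toLinearMap_comp, h]
  exact LinearMap.toMatrix'_id

variable {U : Set (Fin n → ℝ)} {p : Fin n → ℝ}

theorem exists_isSmoothDiffeoOn_of_bijective_fderiv (hU : IsOpen U) (hφ : ContDiffOn ℝ ∞ φ U)
    (hp : p ∈ U) (hφp : Function.Bijective (fderiv ℝ φ p)) :
    ∃ W ⊆ U, p ∈ W ∧ IsSmoothDiffeoOn φ W := by
  have hφU {x} (hx : x ∈ U) : ContDiffAt ℝ ∞ φ x := hφ.contDiffAt (hU.mem_nhds hx)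
  have hderiv {x} (hx : x ∈ U) : HasFDerivAt φ (fderiv ℝ φ x) x :=
    ((hφU hx).differentiableAt (by simp)).hasFDerivAt
  let e : (Fin n → ℝ) ≃L[ℝ] (Fin n → ℝ) :=
    (LinearEquiv.ofBijective (fderiv ℝ φ p).toLinearMap hφp).toContinuousLinearEquiv
  have he : HasFDerivAt φ (e : (Fin n → ℝ) →L[ℝ] (Fin n → ℝ)) p := hderiv hp
  let Φ := (hφU hp).toOpenPartialHomeomorph φ he (by simp)
  let V : Set (Fin n → ℝ) :=
    U ∩ fderiv ℝ φ ⁻¹' Set.range ContinuousLinearEquiv.toContinuousLinearMap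
  have hV : IsOpen V :=
    (hφ.continuousOn_fderiv_of_isOpen hU (by simp)).isOpen_inter_preimage hU
      ContinuousLinearEquiv.isOpen
  have hleft {x} (hx : x ∈ Φ.source) : Φ.symm (φ x) = x := Φ.left_inv hx
  refine ⟨Φ.source ∩ V, fun x hx => hx.2.1,
    ⟨(hφU hp).mem_toOpenPartialHomeomorph_source he (by simp), hp, e, rfl⟩,
    Φ.open_source.inter hV,
    Φ.isOpen_image_of_subset_source (Φ.open_source.inter hV) Set.inter_subset_left,
    fun x hx => (hφU hx.2.1).contDiffWithinAt, Φ.symm, ?_, fun x hx => hleft hx.1, ?_⟩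
  · rintro _ ⟨x, ⟨hxΦ, hxU, e', he'⟩, rfl⟩
    have hφx : HasFDerivAt φ (e' : (Fin n → ℝ) →L[ℝ] (Fin n → ℝ)) x := he' ▸ hderiv hxU
    refine (Φ.contDiffAt_symm (Φ.map_source hxΦ) (f₀' := e') ?_ ?_).contDiffWithinAt
    · exact (hleft hxΦ).symm ▸ hφx
    · exact (hleft hxΦ).symm ▸ hφU hxU
  · rintro _ ⟨x, hx, rfl⟩
    exact congrArg φ (hleft hx.1)

theorem exists_bijective_prod {K V V' : Type*} [Field K] [AddCommGroup V] [Module K V]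
    [FiniteDimensional K V] [AddCommGroup V'] [Module K V'] {L : V →ₗ[K] V'}
    (hL : Function.Surjective L) {r : ℕ} (hr : Module.finrank K V = Module.finrank K V' + r) :
    ∃ g : V →ₗ[K] (Fin r → K), Function.Bijective (L.prod g) := by
  have hV' : FiniteDimensional K V' := Module.Finite.of_surjective L hL
  have hker : Module.finrank K (LinearMap.ker L) = r := by
    have hrank := L.finrank_range_add_finrank_ker
    rw [LinearMap.range_eq_top.2 hL, finrank_top] at hrank
    lia
  obtain ⟨π, hπ⟩ := (LinearMap.ker L).subtype.exists_leftInverse_of_injective (by simp)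
  let e : LinearMap.ker L ≃ₗ[K] (Fin r → K) := LinearEquiv.ofFinrankEq _ _ (by simp [hker])
  have hinj : Function.Injective (L.prod (e.toLinearMap ∘ₗ π)) := by
    refine (injective_iff_map_eq_zero _).2 fun v hv => ?_
    obtain ⟨hLv, hgv⟩ := Prod.ext_iff.1 hv
    have hπv : π v = ⟨v, hLv⟩ := LinearMap.congr_fun hπ ⟨v, hLv⟩
    have h0 : π v = 0 := e.map_eq_zero_iff.1 hgv
    exact congrArg Subtype.val (hπv.symm.trans h0)
  refine ⟨_, hinj, ?_⟩
  exact (LinearMap.injective_iff_surjective_of_finrank_eq_finrank (by simp [hr])).1 hinj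

theorem exists_isSmoothDiffeoOn_of_surjective_fderiv {m : ℕ} (hm : m ≤ n)
    {f : (Fin n → ℝ) → (Fin m → ℝ)} (hU : IsOpen U) (hf : ContDiffOn ℝ ∞ f U) (hp : p ∈ U)
    (hfp : f p = 0) (hs : Function.Surjective (fderiv ℝ f p)) :
    ∃ W ⊆ U, p ∈ W ∧ ∃ ψ : (Fin n → ℝ) → (Fin n → ℝ), IsSmoothDiffeoOn ψ W ∧ ψ p = 0 ∧
      ∀ x i, ψ x (Fin.castLE hm i) = f x i := by
  obtain ⟨r, rfl⟩ := Nat.exists_eq_add_of_le hm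
  obtain ⟨g, hg⟩ := exists_bijective_prod (L := (fderiv ℝ f p).toLinearMap) hs (r := r) (by simp)
  let a : ((Fin m → ℝ) × (Fin r → ℝ)) ≃L[ℝ] (Fin (m + r) → ℝ) :=
    ((LinearEquiv.sumArrowLequivProdArrow (Fin m) (Fin r) ℝ ℝ).symm.trans
      (LinearEquiv.funCongrLeft ℝ ℝ finSumFinEquiv.symm)).toContinuousLinearEquiv
  have hg' : ContDiff ℝ ∞ g := g.toContinuousLinearMap.contDiff
  let ψ : (Fin (m + r) → ℝ) → (Fin (m + r) → ℝ) := fun x => a (f x, g (x - p))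
  have hψ : ContDiffOn ℝ ∞ ψ U := by
    refine a.contDiff.comp_contDiffOn (hf.prodMk ?_)
    exact (hg'.comp (contDiff_id.sub contDiff_const)).contDiffOn
  have hderiv : HasFDerivAt ψ ((a : _ →L[ℝ] (Fin (m + r) → ℝ)).comp
      ((fderiv ℝ f p).prod g.toContinuousLinearMap)) p := by
    have hfd : HasFDerivAt f (fderiv ℝ f p) p :=
      ((hf.contDiffAt (hU.mem_nhds hp)).differentiableAt (by simp)).hasFDerivAt
    have hgd : HasFDerivAt (fun x => g (x - p)) g.toContinuousLinearMap p :=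
      g.toContinuousLinearMap.hasFDerivAt.comp p ((hasFDerivAt_id p).sub_const p)
    exact a.hasFDerivAt.comp p (hfd.prodMk hgd)
  obtain ⟨W, hWU, hpW, hψW⟩ := exists_isSmoothDiffeoOn_of_bijective_fderiv hU hψ hp
    (by rw [hderiv.fderiv]; exact a.bijective.comp hg)
  refine ⟨W, hWU, hpW, ψ, hψW, ?_, fun x i => ?_⟩
  · simp [ψ, hfp]
  · have hi : Fin.castLE hm i = finSumFinEquiv (Sum.inl i) := rfl
    simp [ψ, a, hi, LinearEquiv.funCongrLeft_apply]

end LocalDiffeomorphisms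

section Faces

variable {n q k : ℕ} {P : (Fin n → ℝ) → MultiVec n q} {U : Set (Fin n → ℝ)} {p : Fin n → ℝ}

/-- The multi-index obtained from `{s 0 < ⋯ < s q}` by omitting `s j`. -/
def Idx.face (s : Fin (q + 1) ↪o Fin n) (j : Fin (q + 1)) : Idx n q :=
  ofOrderEmb (j.succAboveOrderEmb.trans s)

/-- The coordinates of the `q`-vector field `P` on the `q + 1` faces of `{s 0 < ⋯ < s q}`.
For `Π_{k,q}` and `s = {0 < ⋯ < q}` they are `x_0, …, x_q` up to sign. -/
def faceCoords (s : Fin (q + 1) ↪o Fin n) (P : (Fin n → ℝ) → MultiVec n q) (x : Fin n → ℝ) :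
    Fin (q + 1) → ℝ :=
  fun j => P x (Idx.face s j)

theorem fderiv_faceCoords (s : Fin (q + 1) ↪o Fin n) (hP : DifferentiableAt ℝ P p)
    (v : Fin n → ℝ) (j : Fin (q + 1)) :
    fderiv ℝ (faceCoords s P) p v j = fderiv ℝ P p v (Idx.face s j) := by
  have hface : HasFDerivAt (faceCoords s P)
      (ContinuousLinearMap.pi fun j => (ContinuousLinearMap.proj (Idx.face s j)).comp
        (fderiv ℝ P p)) p :=
    hasFDerivAt_pi.2 fun j => hasFDerivAt_pi'.1 hP.hasFDerivAt (Idx.face s j)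
  rw [hface.fderiv]
  rfl

theorem IsNambu.contDiffOn_faceCoords (hN : IsNambu n q P U) (s : Fin (q + 1) ↪o Fin n) :
    ContDiffOn ℝ ∞ (faceCoords s P) U :=
  contDiffOn_pi.2 fun j => contDiffOn_pi.1 hN.1 (Idx.face s j)

theorem IsNambu.exists_eventually_eq_minors (hN : IsNambu n q P U) (hqn : q ≤ n) (hp : p ∈ U)
    (hPp : P p ≠ 0) :
    ∃ M : (Fin n → ℝ) → Matrix (Fin n) (Fin q) ℝ,
      (∀ i j, DifferentiableAt ℝ (fun x => M x i j) p) ∧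
        ∀ᶠ x in 𝓝 p, ∀ J : Idx n q, P x J = ((M x).submatrix (J.1.orderEmbOfFin J.2) id).det := by
  obtain ⟨W, hpW, -, φ, hφ, hφP⟩ := hN.2 p hp hPp
  obtain ⟨ψ, hψ⟩ := hφ.exists_leftInverse_fderiv
  refine ⟨fun x => (jac ψ (φ x)).submatrix id (Fin.castLEOrderEmb hqn), fun i j => ?_, ?_⟩
  · have hjac := differentiableAt_jac ((hψ p hpW).1.of_le (WithTop.coe_le_coe.2 le_top)) i
      (Fin.castLEOrderEmb hqn j)
    exact hjac.comp p ((hφ.contDiffAt hpW).differentiableAt (by simp))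
  · filter_upwards [hφ.1.mem_nhds hpW] with x hx J
    have hPx : P x = extPow n q (jac ψ (φ x)) (stdVec n q) := by
      rw [← hφP x hx, ← extPow_mul, jac_mul_jac_eq_one (hψ x hx).2, extPow_one]
    rw [hPx, extPow_stdVec hqn]
    rfl

theorem IsNambu.eq_zero_of_faceCoords_eq_zero (hq : 2 ≤ q) (hN : IsNambu n q P U) (hp : p ∈ U)
    {s : Fin (q + 1) ↪o Fin n} (h0 : faceCoords s P p = 0)
    (hs : Function.Surjective (fderiv ℝ (faceCoords s P) p)) : P p = 0 := by
  by_contra hPp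
  have hqn : q ≤ n :=
    (Nat.le_succ q).trans (by simpa using Fintype.card_le_of_embedding s.toEmbedding)
  obtain ⟨M, hM, hPM⟩ := hN.exists_eventually_eq_minors hqn hp hPp
  have hminors : faceCoords s P =ᶠ[𝓝 p] fun x => maximalMinors ((M x).submatrix s id) := by
    filter_upwards [hPM] with x hx
    ext j
    rw [faceCoords, hx, Idx.face, Idx.orderEmbOfFin_ofOrderEmb]
    rfl
  rw [hminors.fderiv_eq] at hs
  exact not_surjective_fderiv_maximalMinors hq (fun i j => hM (s i) j)
    (hminors.eq_of_nhds.symm.trans h0) hs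

theorem coe_face_castLEOrderEmb (hn : q < n) (j : Fin (q + 1)) :
    (Idx.face (Fin.castLEOrderEmb hn) j : Finset (Fin n)) =
      (topIdx n q).erase (Fin.castLE hn j) := by
  ext i
  simp only [Idx.face, Idx.ofOrderEmb, topIdx, Finset.mem_map, Finset.mem_univ, true_and,
    Finset.mem_erase, Finset.mem_filter_univ]
  constructor
  · rintro ⟨l, rfl⟩
    exact ⟨fun h => j.succAbove_ne l (Fin.castLE_injective hn h), (j.succAbove l).isLt⟩
  · rintro ⟨hij, hi⟩
    obtain ⟨l, hl⟩ := Fin.exists_succAbove_eq (x := ⟨i, hi⟩) (y := j) fun h => hij (h ▸ rfl)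
    exact ⟨l, congrArg (Fin.castLE hn) hl⟩

theorem modelPi_face (hn : q < n) (v : Fin n → ℝ) (j : Fin (q + 1)) :
    modelPi n q k v (Idx.face (Fin.castLEOrderEmb hn) j) =
      (-1) ^ (j : ℕ) * eps k (Fin.castLE hn j) * v (Fin.castLE hn j) := by
  have hiff (i : Fin n) : ((i : ℕ) < q + 1 ∧
      (topIdx n q).erase (Fin.castLE hn j) = (topIdx n q).erase i) ↔ Fin.castLE hn j = i := by
    refine ⟨fun ⟨_, h⟩ => ((topIdx n q).erase_inj ?_).1 h, ?_⟩
    · simpa [topIdx] using j.is_le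
    · rintro rfl
      exact ⟨j.isLt, rfl⟩
  simp only [modelPi, coe_face_castLEOrderEmb, hiff, Finset.sum_ite_eq, Finset.mem_univ, if_true,
    Fin.val_castLE]

theorem surjective_fderiv_faceCoords_of_modelPi (hn : q < n) (hP : DifferentiableAt ℝ P p)
    (hlin : ∀ v, fderiv ℝ P p v = modelPi n q k v) :
    Function.Surjective (fderiv ℝ (faceCoords (Fin.castLEOrderEmb hn) P) p) := by
  intro y
  let c (j : Fin (q + 1)) : ℝ := (-1) ^ (j : ℕ) * eps k (Fin.castLE hn j)
  have hc (j : Fin (q + 1)) : c j ≠ 0 := by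
    simp only [c, eps]
    split_ifs <;> simp
  obtain ⟨v, hv⟩ := (Fin.castLE_injective hn).surjective_comp_right fun j => (c j)⁻¹ * y j
  refine ⟨v, funext fun j => ?_⟩
  rw [fderiv_faceCoords _ hP, hlin, modelPi_face, show v (Fin.castLE hn j) = _ from congrFun hv j]
  exact mul_inv_cancel_left₀ (hc j) (y j)

end Faces

theorem singular_locus_submanifold_general {n q : ℕ} (hq : 2 ≤ q) {U : Set (Fin n → ℝ)}
    (hU : IsOpen U) {P : (Fin n → ℝ) → MultiVec n q} (hN : IsNambu n q P U) {p : Fin n → ℝ}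
    (hp : p ∈ U) (hP : P p = 0) (s : Fin (q + 1) ↪o Fin n)
    (hs : Function.Surjective (fderiv ℝ (faceCoords s P) p)) :
    ∃ W : Set (Fin n → ℝ), W ⊆ U ∧ p ∈ W ∧
      ∃ ψ : (Fin n → ℝ) → (Fin n → ℝ), IsSmoothDiffeoOn ψ W ∧ ψ p = 0 ∧
        ∀ x ∈ W, (P x = 0 ↔ ∀ j : Fin n, (j : ℕ) < q + 1 → ψ x j = 0) := by
  have hqn : q + 1 ≤ n := by simpa using Fintype.card_le_of_embedding s.toEmbedding
  have hfP {x} (hx : P x = 0) : faceCoords s P x = 0 := funext fun j => congrFun hx (Idx.face s j)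
  obtain ⟨W, hWU, hpW, ψ, hψ, hψp, hψs⟩ := exists_isSmoothDiffeoOn_of_surjective_fderiv hqn hU
    (hN.contDiffOn_faceCoords s) hp (hfP hP) hs
  have hface : faceCoords s P = fun x i => ψ x (Fin.castLE hqn i) :=
    funext fun x => funext fun i => (hψs x i).symm
  refine ⟨W, hWU, hpW, ψ, hψ, hψp, fun x hx => ⟨fun hPx j hj => ?_, fun hψx => ?_⟩⟩
  · exact (hψs x ⟨j, hj⟩).trans (congrFun (hfP hPx) ⟨j, hj⟩)
  · have hsx : Function.Surjective (fderiv ℝ (faceCoords s P) x) :=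
      hface ▸ hψ.surjective_fderiv_coords hx (Fin.castLE_injective hqn)
    exact hN.eq_zero_of_faceCoords_eq_zero hq (hWU hx)
      (funext fun i => (hψs x i).symm.trans (hψx _ i.isLt)) hsx

/-- (result 1) recalled in the paper, from Dufour–Zung 1999).
The local singular locus of a smooth Nambu structure of order `q` whose linear part
at `0` is the nondegenerate Type 1 model `Π_{k,q}` is, near `0`, a smooth
submanifold of codimension `q+1` through `0`: in suitable local smooth coordinates
`ψ` it is `{ψ₁ = ⋯ = ψ_{q+1} = 0}`. -/
theorem singular_locus_submanifold (n q k : ℕ) (hq : 2 ≤ q) (hn : q < n) (hk : k ≤ q + 1)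
    (U : Set (Fin n → ℝ)) (hU : IsOpen U) (h0U : (0 : Fin n → ℝ) ∈ U)
    (P : (Fin n → ℝ) → MultiVec n q) (hN : IsNambu n q P U)
    (hP0 : P 0 = 0) (hlin : ∀ v : Fin n → ℝ, fderiv ℝ P 0 v = modelPi n q k v) :
    ∃ W : Set (Fin n → ℝ), W ⊆ U ∧ (0 : Fin n → ℝ) ∈ W ∧
      ∃ ψ : (Fin n → ℝ) → (Fin n → ℝ), IsSmoothDiffeoOn ψ W ∧ ψ 0 = 0 ∧
        ∀ x ∈ W, (P x = 0 ↔ ∀ j : Fin n, (j : ℕ) < q + 1 → ψ x j = 0) :=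
  singular_locus_submanifold_general hq hU hN h0U hP0 (Fin.castLEOrderEmb hn)
    (surjective_fderiv_faceCoords_of_modelPi hn
      ((hN.1.contDiffAt (hU.mem_nhds h0U)).differentiableAt (by simp)) hlin)

end NambuLin
end

section
/- Let n > q ≥ 2 and 0 ≤ k ≤ q+1, with ε_j = 1 for 1 ≤ j ≤ k and ε_j = −1 for k < j ≤ q+1, and let J be the (q+1)×(q+1) diagonal matrix J = diag(ε₁,…,ε_{q+1}). For each increasing multi-index 1 ≤ i₁ < ⋯ < i_{q−1} ≤ q+1 let X_{i₁…i_{q−1}} be the linear vector field (e*_{i₁} ∧ ⋯ ∧ e*_{i_{q−1}}) ⌟ Π_{k,q} on ℝⁿ. Each X_{i₁…i_{q−1}} depends only on the variables x₁,…,x_{q+1} and takes values in the span of e₁,…,e_{q+1}, hence is identified with a matrix in gl(q+1, ℝ). Then the real linear span g of these matrices is a Lie subalgebra of gl(q+1, ℝ) under the commutator bracket, and g is isomorphic as a real Lie algebra to so(k, q+1−k) = {A ∈ gl(q+1, ℝ) : Aᵀ J + J A = 0}. -/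
open scoped ContDiff

namespace NambuLin

/-- The shuffle sign `(−1)^{#{(s,t) ∈ S × K : s > t}}`: for disjoint increasing
multi-indices `S, K` one has `e*_S ∧ e*_K = shufSign S K · e*_{S ∪ K}`. -/
def shufSign {n : ℕ} (S K : Finset (Fin n)) : ℝ :=
  (-1 : ℝ) ^ (((S ×ˢ K).filter fun p : Fin n × Fin n => p.2 < p.1).card)

/-- The contraction `e*_S ⌟ w` of a `q`-vector `w` with the basis covector
`e*_S = e*_{s₁} ∧ ⋯ ∧ e*_{s_r}` (`S = {s₁ < ⋯ < s_r}`, `r = q - m`), determined by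
`⟨e*_K, e*_S ⌟ w⟩ = ⟨e*_S ∧ e*_K, w⟩`: its `K`-th coordinate is
`shufSign S K · w_{S ∪ K}` when `S, K` are disjoint (and `0` otherwise, in
accordance with the graded pairing). -/
def contr (n q m : ℕ) (S : Finset (Fin n)) (w : MultiVec n q) : MultiVec n m :=
  fun K => if h : Disjoint S (K : Finset (Fin n)) ∧ (S ∪ (K : Finset (Fin n))).card = q
    then shufSign S K.1 * w ⟨S ∪ K.1, h.2⟩ else 0

/-- The inclusion `Fin (q+1) → Fin n` on the first `q+1` indices. -/
def embQ (n q : ℕ) (h : q + 1 ≤ n) (i : Fin (q + 1)) : Fin n :=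
  ⟨(i : ℕ), lt_of_lt_of_le i.isLt h⟩

/-- The matrix in `gl(q+1, ℝ)` of the linear vector field
`X_S = e*_S ⌟ Π_{k,q}` (which depends only on `x₁,…,x_{q+1}` and takes values in
the span of `e₁,…,e_{q+1}`): its `(i,j)` entry is the `e_i`-coefficient of
`X_S(e_j)`. -/
def matOf (n q k : ℕ) (h : q + 1 ≤ n) (S : Finset (Fin n)) :
    Matrix (Fin (q + 1)) (Fin (q + 1)) ℝ :=
  Matrix.of fun i j =>
    contr n q 1 S (modelPi n q k (Pi.single (embQ n q h j) 1))
      ⟨{embQ n q h i}, Finset.card_singleton _⟩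

/-!
The multi-indices `S` of the vector fields `X_S` are the complements of pairs `a < b` in
`{1, …, q+1}`. Only the terms `j = a` and `j = b` of `Π_{k,q}` survive the contraction with `e*_S`,
and their signs turn out to be opposite, so that `X_S = ±(ε_b x_b e_a - ε_a x_a e_b)`: an
infinitesimal rotation of the plane of `e_a` and `e_b` with respect to the form `J`. Conversely, a
matrix `A` satisfies `2A = ∑_{a,b} (A_{ab} E_{ab} + A_{ba} E_{ba})`, and if `A` is skew-adjoint
for `J` each summand is a multiple of such a rotation. Hence `g` is equal to `so(k, q+1-k)`, and
the isomorphism is the identity.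
-/

section DiagonalForm

open Matrix

variable {ι R : Type*} [CommRing R]

lemma isSkewAdjoint_iff_add_eq_zero [Fintype ι] {J A : Matrix ι ι R} :
    J.IsSkewAdjoint A ↔ Aᵀ * J + J * A = 0 := by
  rw [Matrix.IsSkewAdjoint, Matrix.IsAdjointPair, mul_neg, eq_neg_iff_add_eq_zero]

variable [DecidableEq ι]

/-- The infinitesimal rotation `d_b E_{ab} - d_a E_{ba}` in the plane of `e_a` and `e_b`, with
respect to the bilinear form `diag(d)`. -/
def rotationGen (d : ι → R) (a b : ι) : Matrix ι ι R :=
  single a b (d b) - single b a (d a)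

lemma rotationGen_self (d : ι → R) (a : ι) : rotationGen d a a = 0 :=
  sub_self _

lemma neg_rotationGen (d : ι → R) (a b : ι) : -rotationGen d a b = rotationGen d b a :=
  neg_sub _ _

variable [Fintype ι]

lemma isSkewAdjoint_diagonal_iff {d : ι → R} {A : Matrix ι ι R} :
    (diagonal d).IsSkewAdjoint A ↔ ∀ a b, d b * A b a = -(d a * A a b) := by
  simp only [Matrix.IsSkewAdjoint, Matrix.IsAdjointPair, ← Matrix.ext_iff, mul_diagonal,
    diagonal_mul, transpose_apply, Matrix.neg_apply, mul_neg, mul_comm]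

lemma rotationGen_mem_skewAdjoint (d : ι → R) (a b : ι) :
    rotationGen d a b ∈ skewAdjointMatricesSubmodule (diagonal d) := by
  rw [mem_skewAdjointMatricesSubmodule, isSkewAdjoint_diagonal_iff]
  intro i j
  simp only [rotationGen, Matrix.sub_apply, single_apply]
  grind

lemma smul_rotationGen_eq_single_add_single {d : ι → Rˣ} {A : Matrix ι ι R}
    (hA : (diagonal fun i => (d i : R)).IsSkewAdjoint A) (a b : ι) :
    (A a b * ↑(d b)⁻¹) • rotationGen (fun i => (d i : R)) a b =
      single a b (A a b) + single b a (A b a) := by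
  have hba : A b a = -(A a b * ↑(d b)⁻¹ * d a) := by
    rw [← Units.mul_right_inj (d b), isSkewAdjoint_diagonal_iff.1 hA]
    linear_combination (d a * A a b) * (d b).mul_inv
  rw [rotationGen, smul_sub, smul_single, smul_single, smul_eq_mul, smul_eq_mul,
    Units.inv_mul_cancel_right, hba, ← single_neg, sub_eq_add_neg]

lemma add_self_eq_sum_single_add_single {α : Type*} [AddCommMonoid α] (A : Matrix ι ι α) :
    A + A = ∑ a, ∑ b, (single a b (A a b) + single b a (A b a)) := by
  simp only [Finset.sum_add_distrib]
  rw [Finset.sum_comm (f := fun a b => single b a (A b a)), ← matrix_eq_sum_single]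

theorem span_rotationGen [Invertible (2 : R)] {d : ι → R} (hd : ∀ i, IsUnit (d i)) :
    Submodule.span R {M | ∃ a b, M = rotationGen d a b} =
      skewAdjointMatricesSubmodule (diagonal d) := by
  lift d to ι → Rˣ using hd
  refine le_antisymm (Submodule.span_le.2 ?_) fun A hA => ?_
  · rintro _ ⟨a, b, rfl⟩
    exact rotationGen_mem_skewAdjoint _ a b
  · rw [mem_skewAdjointMatricesSubmodule] at hA
    rw [← invOf_smul_smul (2 : R) A, two_smul, add_self_eq_sum_single_add_single]
    refine Submodule.smul_mem _ _ (Submodule.sum_mem _ fun a _ => Submodule.sum_mem _ fun b _ => ?_)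
    rw [← smul_rotationGen_eq_single_add_single hA]
    exact Submodule.smul_mem _ _ (Submodule.subset_span ⟨a, b, rfl⟩)

end DiagonalForm

section ModelStructure

variable {n q k : ℕ}

lemma mem_topIdx {i : Fin n} : i ∈ topIdx n q ↔ (i : ℕ) < q + 1 := by
  simp [topIdx]

lemma topIdx_eq_Iic (h : q + 1 ≤ n) : topIdx n q = Finset.Iic (embQ n q h (Fin.last q)) := by
  ext i
  simp [mem_topIdx, embQ, Fin.le_def]

lemma card_topIdx (h : q + 1 ≤ n) : (topIdx n q).card = q + 1 := by
  simp [topIdx_eq_Iic h, embQ]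

lemma card_filter_lt_topIdx (h : q + 1 ≤ n) (i : Fin n) :
    ((topIdx n q).filter (i < ·)).card = q - i := by
  have hIoc : (topIdx n q).filter (i < ·) = Finset.Ioc i (embQ n q h (Fin.last q)) := by
    ext s
    simp [topIdx_eq_Iic h, and_comm]
  simp [hIoc, embQ]

lemma modelPi_congr {x y : Fin n → ℝ} (hxy : ∀ j : Fin n, (j : ℕ) < q + 1 → x j = y j) :
    modelPi n q k x = modelPi n q k y := by
  funext J
  refine Finset.sum_congr rfl fun j _ => ?_
  split_ifs with hj
  · rw [hxy j hj.1]
  · rfl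

lemma modelPi_eq_zero_of_not_subset (x : Fin n → ℝ) {J : Idx n q} (hJ : ¬ J.1 ⊆ topIdx n q) :
    modelPi n q k x J = 0 :=
  Finset.sum_eq_zero fun j _ =>
    if_neg fun ⟨_, hj⟩ => hJ (hj ▸ Finset.erase_subset j (topIdx n q))

lemma modelPi_of_eq_erase (x : Fin n → ℝ) {J : Idx n q} {j : Fin n} (hj : j ∈ topIdx n q)
    (hJ : J.1 = (topIdx n q).erase j) :
    modelPi n q k x J = (-1) ^ (j : ℕ) * eps k j * x j := by
  rw [modelPi, Finset.sum_eq_single j]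
  · exact if_pos ⟨mem_topIdx.1 hj, hJ⟩
  · refine fun i _ hij => if_neg fun ⟨_, hi⟩ => hij ?_
    exact ((Finset.erase_inj _ hj).1 (hJ.symm.trans hi)).symm
  · exact fun h => absurd (Finset.mem_univ j) h

lemma contr_singleton_of_mem {S : Finset (Fin n)} {i : Fin n} (hi : i ∈ S) (w : MultiVec n q) :
    contr n q 1 S w ⟨{i}, Finset.card_singleton i⟩ = 0 :=
  dif_neg fun h => Finset.disjoint_singleton_right.1 h.1 hi

lemma contr_modelPi_singleton_of_notMem_topIdx (S : Finset (Fin n)) (x : Fin n → ℝ) {i : Fin n}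
    (hi : i ∉ topIdx n q) :
    contr n q 1 S (modelPi n q k x) ⟨{i}, Finset.card_singleton i⟩ = 0 := by
  rw [contr]
  split_ifs
  · rw [modelPi_eq_zero_of_not_subset, mul_zero]
    exact fun h => hi (h (Finset.mem_union_right _ (Finset.mem_singleton_self i)))
  · rfl

lemma shufSign_singleton (S : Finset (Fin n)) (i : Fin n) :
    shufSign S {i} = (-1) ^ (S.filter (i < ·)).card := by
  simp [shufSign, Finset.product_singleton, Finset.filter_map]

lemma isUnit_eps (j : Fin n) : IsUnit (eps k j) := by
  unfold eps
  split_ifs <;> simp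

end ModelStructure

section PairComplement

variable {n q : ℕ} (k : ℕ) (h : q + 1 ≤ n)

lemma embQ_injective : Function.Injective (embQ n q h) :=
  Fin.castLE_injective h

lemma embQ_mem_topIdx (a : Fin (q + 1)) : embQ n q h a ∈ topIdx n q :=
  mem_topIdx.2 a.isLt

/-- The multi-index `{1, …, q+1} \ {a, b}`; those with `a < b` are exactly the multi-indices of the
vector fields `X_S`. -/
def pairCompl (a b : Fin (q + 1)) : Finset (Fin n) :=
  topIdx n q \ {embQ n q h a, embQ n q h b}

lemma pairCompl_comm (a b : Fin (q + 1)) : pairCompl h a b = pairCompl h b a := by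
  rw [pairCompl, pairCompl, Finset.pair_comm]

lemma pairCompl_subset_topIdx (a b : Fin (q + 1)) : pairCompl h a b ⊆ topIdx n q :=
  Finset.sdiff_subset

variable {a b : Fin (q + 1)}

lemma embQ_mem_pairCompl {i : Fin (q + 1)} :
    embQ n q h i ∈ pairCompl h a b ↔ i ≠ a ∧ i ≠ b := by
  simp [pairCompl, embQ_mem_topIdx, (embQ_injective h).eq_iff]

lemma card_pairCompl (hab : a ≠ b) : (pairCompl h a b).card = q - 1 := by
  have hsub : {embQ n q h a, embQ n q h b} ⊆ topIdx n q := by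
    simp [Finset.insert_subset_iff, embQ_mem_topIdx]
  rw [pairCompl, Finset.card_sdiff_of_subset hsub, card_topIdx h,
    Finset.card_pair ((embQ_injective h).ne hab)]
  rfl

lemma pairCompl_union_singleton (hab : a ≠ b) :
    pairCompl h a b ∪ {embQ n q h a} = (topIdx n q).erase (embQ n q h b) := by
  have hne := (embQ_injective h).ne hab
  have ha := embQ_mem_topIdx h a
  ext s
  simp only [pairCompl, Finset.mem_union, Finset.mem_sdiff, Finset.mem_insert,
    Finset.mem_singleton, Finset.mem_erase]
  grind

lemma exists_eq_pairCompl (hq : 1 ≤ q) {S : Finset (Fin n)} (hcard : S.card = q - 1)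
    (hS : S ⊆ topIdx n q) : ∃ a b, a < b ∧ S = pairCompl h a b := by
  have hcompl : (topIdx n q \ S).card = 2 := by
    rw [Finset.card_sdiff_of_subset hS, card_topIdx h, hcard]
    omega
  obtain ⟨x, y, hxy, hSxy⟩ := Finset.card_eq_two.1 hcompl
  have hsub : {x, y} ⊆ topIdx n q := hSxy ▸ Finset.sdiff_subset
  obtain ⟨hx, hy⟩ : x ∈ topIdx n q ∧ y ∈ topIdx n q := by
    simpa [Finset.insert_subset_iff] using hsub
  let a : Fin (q + 1) := ⟨x, mem_topIdx.1 hx⟩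
  let b : Fin (q + 1) := ⟨y, mem_topIdx.1 hy⟩
  have hSab : S = pairCompl h a b := by
    rw [← Finset.sdiff_sdiff_eq_self hS, hSxy]
    rfl
  have hab : a ≠ b := fun e => hxy (Fin.ext (Fin.mk.inj e))
  rcases hab.lt_or_gt with hlt | hgt
  · exact ⟨a, b, hlt, hSab⟩
  · exact ⟨b, a, hgt, hSab.trans (pairCompl_comm h a b)⟩

-- The signs are `(-1) ^ (q - a - 1)` and `(-1) ^ (q - b)`; exponents of the same parity are used
-- instead to avoid truncated subtraction.
lemma shufSign_pairCompl_left (hab : a < b) :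
    shufSign (pairCompl h a b) {embQ n q h a} = (-1) ^ (q + a + 1 : ℕ) := by
  have hlt : embQ n q h a < embQ n q h b := hab
  have hfilter : (pairCompl h a b).filter (embQ n q h a < ·) =
      ((topIdx n q).filter (embQ n q h a < ·)).erase (embQ n q h b) := by
    ext s
    simp only [pairCompl, Finset.mem_filter, Finset.mem_sdiff, Finset.mem_insert,
      Finset.mem_singleton, Finset.mem_erase]
    grind
  have hb : embQ n q h b ∈ (topIdx n q).filter (embQ n q h a < ·) :=
    Finset.mem_filter.2 ⟨embQ_mem_topIdx h b, hlt⟩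
  rw [shufSign_singleton, hfilter, Finset.card_erase_of_mem hb, card_filter_lt_topIdx h]
  apply neg_one_pow_congr
  simp only [embQ, Nat.even_iff]
  omega

lemma shufSign_pairCompl_right (hab : a < b) :
    shufSign (pairCompl h a b) {embQ n q h b} = (-1) ^ (q + b : ℕ) := by
  have hlt : embQ n q h a < embQ n q h b := hab
  have hfilter : (pairCompl h a b).filter (embQ n q h b < ·) =
      (topIdx n q).filter (embQ n q h b < ·) := by
    ext s
    simp only [pairCompl, Finset.mem_filter, Finset.mem_sdiff, Finset.mem_insert,
      Finset.mem_singleton]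
    grind
  rw [shufSign_singleton, hfilter, card_filter_lt_topIdx h]
  apply neg_one_pow_congr
  simp only [embQ, Nat.even_iff]
  omega

lemma contr_pairCompl_modelPi (hab : a ≠ b) (x : Fin n → ℝ) :
    contr n q 1 (pairCompl h a b) (modelPi n q k x)
        ⟨{embQ n q h a}, Finset.card_singleton _⟩ =
      shufSign (pairCompl h a b) {embQ n q h a} *
        ((-1) ^ (b : ℕ) * eps k b * x (embQ n q h b)) := by
  have hdisj : Disjoint (pairCompl h a b) {embQ n q h a} := by
    simp [embQ_mem_pairCompl]
  have hunion := pairCompl_union_singleton h hab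
  have hcard : (pairCompl h a b ∪ {embQ n q h a}).card = q := by
    rw [hunion, Finset.card_erase_of_mem (embQ_mem_topIdx h b), card_topIdx h, Nat.add_sub_cancel]
  rw [contr, dif_pos ⟨hdisj, hcard⟩, modelPi_of_eq_erase x (embQ_mem_topIdx h b) hunion]
  rfl

lemma matOf_pairCompl_left (hab : a ≠ b) (j : Fin (q + 1)) :
    matOf n q k h (pairCompl h a b) a j =
      shufSign (pairCompl h a b) {embQ n q h a} * (-1) ^ (b : ℕ) *
        if j = b then eps k b else 0 := by
  rw [matOf, Matrix.of_apply, contr_pairCompl_modelPi k h hab, Pi.single_apply]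
  simp only [(embQ_injective h).eq_iff, eq_comm (a := b), mul_ite, mul_one, mul_zero, mul_assoc]

lemma matOf_pairCompl_right (hab : a ≠ b) (j : Fin (q + 1)) :
    matOf n q k h (pairCompl h a b) b j =
      shufSign (pairCompl h a b) {embQ n q h b} * (-1) ^ (a : ℕ) *
        if j = a then eps k a else 0 := by
  rw [pairCompl_comm, matOf_pairCompl_left k h hab.symm]

theorem matOf_pairCompl (hab : a < b) :
    matOf n q k h (pairCompl h a b) = (-1 : ℝ) ^ (q + a + b + 1 : ℕ) • rotationGen (eps k) a b := by
  ext i j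
  rw [Matrix.smul_apply, smul_eq_mul, rotationGen, Matrix.sub_apply, Matrix.single_apply,
    Matrix.single_apply]
  rcases eq_or_ne i a with rfl | hia
  · rw [matOf_pairCompl_left k h hab.ne, shufSign_pairCompl_left h hab]
    simp only [hab.ne', eq_comm (a := j), true_and, false_and, if_false, sub_zero]
    ring
  rcases eq_or_ne i b with rfl | hib
  · rw [matOf_pairCompl_right k h hab.ne, shufSign_pairCompl_right h hab]
    simp only [hab.ne, eq_comm (a := j), true_and, false_and, if_false, zero_sub]
    ring
  · simp only [hia.symm, hib.symm, false_and, if_false, sub_zero, mul_zero]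
    exact contr_singleton_of_mem ((embQ_mem_pairCompl h).2 ⟨hia, hib⟩) _

end PairComplement

/-- The span `g` of the matrices of the vector fields `X_S`. -/
def fieldSpan (n q k : ℕ) (h : q + 1 ≤ n) : Submodule ℝ (Matrix (Fin (q + 1)) (Fin (q + 1)) ℝ) :=
  Submodule.span ℝ
    {M | ∃ S : Finset (Fin n), S.card = q - 1 ∧ S ⊆ topIdx n q ∧ M = matOf n q k h S}

lemma rotationGen_mem_fieldSpan {n q : ℕ} (k : ℕ) (h : q + 1 ≤ n) (a b : Fin (q + 1)) :
    rotationGen (eps k) a b ∈ fieldSpan n q k h := by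
  wlog hab : a ≤ b generalizing a b
  · rw [← neg_rotationGen]
    exact Submodule.neg_mem _ (this b a (le_of_not_ge hab))
  rcases hab.eq_or_lt with rfl | hlt
  · rw [rotationGen_self]
    exact Submodule.zero_mem _
  · have hsign : IsUnit ((-1 : ℝ) ^ (q + a + b + 1 : ℕ)) := isUnit_one.neg.pow _
    rw [← Submodule.smul_mem_iff_of_isUnit _ hsign, ← matOf_pairCompl k h hlt]
    exact Submodule.subset_span ⟨_, card_pairCompl h hlt.ne, pairCompl_subset_topIdx h a b, rfl⟩

theorem fieldSpan_eq_skewAdjoint {n q : ℕ} (k : ℕ) (hq : 1 ≤ q) (h : q + 1 ≤ n) :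
    fieldSpan n q k h = skewAdjointMatricesSubmodule (Matrix.diagonal (eps k)) := by
  apply le_antisymm
  · rw [fieldSpan, Submodule.span_le]
    rintro _ ⟨S, hcard, hS, rfl⟩
    obtain ⟨a, b, hab, rfl⟩ := exists_eq_pairCompl h hq hcard hS
    rw [matOf_pairCompl k h hab]
    exact Submodule.smul_mem _ _ (rotationGen_mem_skewAdjoint _ a b)
  · rw [← span_rotationGen isUnit_eps, Submodule.span_le]
    rintro _ ⟨a, b, rfl⟩
    exact rotationGen_mem_fieldSpan k h a b

/-- the Lie algebra appearing in Section 3 of the paper. The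
linear vector fields `X_{i₁…i_{q−1}} = (e*_{i₁} ∧ ⋯ ∧ e*_{i_{q−1}}) ⌟ Π_{k,q}`,
`1 ≤ i₁ < ⋯ < i_{q−1} ≤ q+1`, depend only on `x₁,…,x_{q+1}` and take values in the
span of `e₁,…,e_{q+1}`; identified with matrices in `gl(q+1,ℝ)`, their span `g` is
closed under the commutator bracket and is isomorphic, as a real Lie algebra, to
`so(k, q+1−k) = {A : Aᵀ J + J A = 0}`, `J = diag(ε₁,…,ε_{q+1})`. -/
theorem span_isomorphic_so (n q k : ℕ) (hq : 2 ≤ q) (hn : q < n) (hk : k ≤ q + 1)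
    (hn' : q + 1 ≤ n)
    (Jm : Matrix (Fin (q + 1)) (Fin (q + 1)) ℝ)
    (hJ : Jm = Matrix.diagonal fun j : Fin (q + 1) => if (j : ℕ) < k then (1 : ℝ) else -1)
    (g : Submodule ℝ (Matrix (Fin (q + 1)) (Fin (q + 1)) ℝ))
    (hg : g = Submodule.span ℝ
      {M | ∃ S : Finset (Fin n), S.card = q - 1 ∧ S ⊆ topIdx n q ∧ M = matOf n q k hn' S}) :
    -- each `X_S` takes values in the span of `e₁,…,e_{q+1}` …
    (∀ S : Finset (Fin n), S.card = q - 1 → S ⊆ topIdx n q →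
      ∀ (x : Fin n → ℝ) (i : Fin n), q + 1 ≤ (i : ℕ) →
        contr n q 1 S (modelPi n q k x) ⟨{i}, Finset.card_singleton _⟩ = 0) ∧
    -- … and depends only on the variables `x₁,…,x_{q+1}`,
    (∀ S : Finset (Fin n), S.card = q - 1 → S ⊆ topIdx n q →
      ∀ x y : Fin n → ℝ, (∀ j : Fin n, (j : ℕ) < q + 1 → x j = y j) →
        contr n q 1 S (modelPi n q k x) = contr n q 1 S (modelPi n q k y)) ∧
    -- `g` is a Lie subalgebra of `gl(q+1,ℝ)`,
    (∀ A ∈ g, ∀ B ∈ g, A * B - B * A ∈ g) ∧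
    -- and `g` is isomorphic as a real Lie algebra to `so(k, q+1-k)`.
    ∃ T : Matrix (Fin (q + 1)) (Fin (q + 1)) ℝ →ₗ[ℝ] Matrix (Fin (q + 1)) (Fin (q + 1)) ℝ,
      Set.InjOn T (g : Set (Matrix (Fin (q + 1)) (Fin (q + 1)) ℝ)) ∧
      T '' (g : Set (Matrix (Fin (q + 1)) (Fin (q + 1)) ℝ)) =
        {A | A.transpose * Jm + Jm * A = 0} ∧
      ∀ A ∈ g, ∀ B ∈ g, T (A * B - B * A) = T A * T B - T B * T A := by
  have hso : g = skewAdjointMatricesSubmodule Jm := by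
    rw [hg, hJ]
    exact fieldSpan_eq_skewAdjoint k (one_le_two.trans hq) hn'
  refine ⟨fun S _ _ x i hi => ?_, fun S _ _ x y hxy => ?_, fun A hA B hB => ?_,
    LinearMap.id, Set.injOn_id _, ?_, fun _ _ _ _ => rfl⟩
  · exact contr_modelPi_singleton_of_notMem_topIdx S x (mt mem_topIdx.1 hi.not_gt)
  · rw [modelPi_congr hxy]
  · rw [hso] at hA hB ⊢
    exact Jm.isSkewAdjoint_bracket hA hB
  · ext A
    simp [hso, isSkewAdjoint_iff_add_eq_zero]

end NambuLin
end
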